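/- arXiv:2004.08800 — 5 statements merged into one kernel-verified Lean document; each statement's English description precedes it below -/
import Mathlib

section
/- Let p ≥ 5 be a prime and θ ∈ [0,π], and set e_n = 1 + p^n − 2·p^{n/2}·cos(nθ). Then the map n ↦ e_n is injective on positive integers: for all n₁, n₂ ≥ 1 with n₁ ≠ n₂ one has e_{n₁} ≠ e_{n₂}. -/
/-- For weights `c, d ∈ [-1, 1]`, the values `1 + s^{2n} - 2 s^n c` strictly increase in `n ≥ 1` when
`s ^ 2 ≥ 5`. -/
lemma one_add_sq_sub_lt_of_lt {s : ℝ} (hs : 0 ≤ s) (hs5 : 5 ≤ s ^ 2) {m n : ℕ} (hm : 1 ≤ m)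
    (hmn : m < n) {c d : ℝ} (hc : -1 ≤ c) (hd : d ≤ 1) :
    1 + (s ^ m) ^ 2 - 2 * s ^ m * c < 1 + (s ^ n) ^ 2 - 2 * s ^ n * d := by
  have hs2 : 2.2 < s := by nlinarith
  have hsm : s ≤ s ^ m := le_self_pow₀ (by linarith) (by omega)
  have hsn : s ^ m * s ≤ s ^ n := by
    rw [← pow_succ]
    exact pow_le_pow_right₀ (by linarith) hmn
  have hgap : s ^ m + 2 < s ^ n := by nlinarith
  have hupper : -(2 * s ^ m * c) ≤ 2 * s ^ m := by nlinarith
  have hlower : 2 * s ^ n * d ≤ 2 * s ^ n := by nlinarith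
  nlinarith

/-- The map `n ↦ e n = 1 + p^n - 2 p^{n/2} cos (n θ)` is injective on positive integers. -/
theorem stmt_2 (p : ℕ) (hp : p.Prime) (hp5 : 5 ≤ p) (θ : ℝ) (hθ : θ ∈ Set.Icc 0 Real.pi)
    (e : ℕ → ℝ)
    (he : ∀ n : ℕ, e n = 1 + (p : ℝ) ^ n - 2 * (p : ℝ) ^ ((n : ℝ) / 2) * Real.cos (n * θ)) :
    ∀ n₁ n₂ : ℕ, 1 ≤ n₁ → 1 ≤ n₂ → n₁ ≠ n₂ → e n₁ ≠ e n₂ := by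
  have hp0 : (0 : ℝ) ≤ p := p.cast_nonneg
  have hsq : √(p : ℝ) ^ 2 = p := Real.sq_sqrt hp0
  have he_sqrt (n : ℕ) :
      e n = 1 + (√(p : ℝ) ^ n) ^ 2 - 2 * √(p : ℝ) ^ n * Real.cos (n * θ) := by
    rw [he, Real.rpow_div_two_eq_sqrt _ hp0, Real.rpow_natCast, pow_right_comm, hsq]
  have hlt {m n : ℕ} (hm : 1 ≤ m) (hmn : m < n) : e m < e n := by
    rw [he_sqrt, he_sqrt]
    exact one_add_sq_sub_lt_of_lt (Real.sqrt_nonneg _) (by rw [hsq]; exact_mod_cast hp5) hm hmn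
      (Real.neg_one_le_cos _) (Real.cos_le_one _)
  intro n₁ n₂ h₁ h₂ hne
  rcases hne.lt_or_gt with h | h
  · exact (hlt h₁ h).ne
  · exact (hlt h₂ h).ne'
end

section
/- Let p ≥ 5 be a prime and θ ∈ (0,π], and set e_n = 1 + p^n − 2·p^{n/2}·cos(nθ). Then for every n ≥ 1 the ratio e_n/e_1 lies in the interval [1, (1 + 2·p^{(n−1)/2}/sin(θ/2) − 1/sin(θ/2))²]. -/
theorem rpow_natCast_div_two {x : ℝ} (hx : 0 ≤ x) (n : ℕ) :
    x ^ ((n : ℝ) / 2) = √x ^ n := by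
  rw [Real.sqrt_eq_rpow, ← Real.rpow_natCast, ← Real.rpow_mul hx]
  congr 1
  ring

/-- Half-angle lower bound for `|1 - q e^{iθ}|²`. -/
theorem sq_mul_sin_half_le (q θ : ℝ) :
    ((q + 1) * Real.sin (θ / 2)) ^ 2 ≤ 1 + q ^ 2 - 2 * q * Real.cos θ := by
  have hcos : Real.cos θ = 1 - 2 * Real.sin (θ / 2) ^ 2 := by
    have h := Real.cos_two_mul (θ / 2)
    rw [mul_div_cancel₀ θ two_ne_zero, Real.cos_sq'] at h
    linarith
  rw [hcos]
  nlinarith [mul_nonneg (sq_nonneg (q - 1)) (sub_nonneg.2 (Real.sin_sq_le_one (θ / 2)))]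

/-- Bound for the ratio `e n / e 1` in terms of `θ`. -/
theorem stmt_3 (p : ℕ) (hp : p.Prime) (hp5 : 5 ≤ p) (θ : ℝ) (hθ : θ ∈ Set.Ioc 0 Real.pi)
    (e : ℕ → ℝ)
    (he : ∀ n : ℕ, e n = 1 + (p : ℝ) ^ n - 2 * (p : ℝ) ^ ((n : ℝ) / 2) * Real.cos (n * θ)) :
    ∀ n : ℕ, 1 ≤ n →
      e n / e 1 ∈ Set.Icc 1
        ((1 + 2 * (p : ℝ) ^ (((n : ℝ) - 1) / 2) / Real.sin (θ / 2)
            - 1 / Real.sin (θ / 2)) ^ 2) := by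
  intro n hn
  obtain ⟨m, rfl⟩ := Nat.exists_eq_add_of_le' hn
  have hp0 : (0 : ℝ) ≤ p := p.cast_nonneg
  obtain ⟨q, hq⟩ : ∃ q, q = √(p : ℝ) := ⟨_, rfl⟩
  have hpq : (p : ℝ) = q ^ 2 := by rw [hq, Real.sq_sqrt hp0]
  have hq2 : 2 ≤ q := by
    rw [hq]
    apply Real.le_sqrt_of_sq_le
    have : (5 : ℝ) ≤ p := by exact_mod_cast hp5
    linarith
  have heq (k : ℕ) : e k = 1 + (q ^ k) ^ 2 - 2 * q ^ k * Real.cos (k * θ) := by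
    rw [he, rpow_natCast_div_two hp0, ← hq, hpq]
    ring
  have hexp : (p : ℝ) ^ ((((m + 1 : ℕ) : ℝ) - 1) / 2) = q ^ m := by
    rw [Nat.cast_add_one, add_sub_cancel_right, rpow_natCast_div_two hp0, hq]
  have hs : 0 < Real.sin (θ / 2) :=
    Real.sin_pos_of_pos_of_lt_pi (by linarith [hθ.1]) (by linarith [hθ.1, hθ.2, Real.pi_pos])
  have hupper (k : ℕ) : e k ≤ (q ^ k + 1) ^ 2 := by
    have : 0 ≤ q ^ k := by positivity
    rw [heq]
    nlinarith [Real.neg_one_le_cos (k * θ)]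
  have hlower (k : ℕ) : (q ^ k - 1) ^ 2 ≤ e k := by
    have : 0 ≤ q ^ k := by positivity
    rw [heq]
    nlinarith [Real.cos_le_one (k * θ)]
  have he1 : ((q + 1) * Real.sin (θ / 2)) ^ 2 ≤ e 1 := by
    simpa [heq] using sq_mul_sin_half_le q θ
  have hden : 0 < (q + 1) * Real.sin (θ / 2) := by positivity
  have he1pos : 0 < e 1 := (pow_pos hden 2).trans_le he1
  have hqm : 1 ≤ q ^ m := one_le_pow₀ (by linarith)
  constructor
  · rw [one_le_div he1pos]
    rcases m with _ | k
    · simp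
    · have hqk : 1 ≤ q ^ k := one_le_pow₀ (by linarith)
      have h1 : q ^ 1 + 1 ≤ q ^ (k + 1 + 1) - 1 := by
        have : q ^ (k + 1 + 1) = q ^ k * q ^ 2 := by ring
        nlinarith [sq_nonneg q]
      calc e 1 ≤ (q ^ 1 + 1) ^ 2 := hupper 1
        _ ≤ (q ^ (k + 1 + 1) - 1) ^ 2 := pow_le_pow_left₀ (by positivity) h1 2
        _ ≤ e (k + 1 + 1) := hlower _
  · rw [hexp]
    calc e (m + 1) / e 1
        ≤ (q ^ (m + 1) + 1) ^ 2 / ((q + 1) * Real.sin (θ / 2)) ^ 2 :=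
          div_le_div₀ (by positivity) (hupper _) (by positivity) he1
      _ = ((q ^ (m + 1) + 1) / ((q + 1) * Real.sin (θ / 2))) ^ 2 := (div_pow _ _ _).symm
      _ ≤ _ := by
          refine pow_le_pow_left₀ (by positivity) ?_ 2
          have hrw : 1 + 2 * q ^ m / Real.sin (θ / 2) - 1 / Real.sin (θ / 2)
              = (Real.sin (θ / 2) + 2 * q ^ m - 1) / Real.sin (θ / 2) := by
            field_simp
          rw [hrw, ← div_div]
          gcongr
          rw [div_le_iff₀ (by linarith), pow_succ]
          nlinarith [mul_pos hs (show 0 < q + 1 by linarith)]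
end

section
/- Let p be a prime and t a real number, and for complex s define B_p(s) = ((1+p−t)·p^{−s}·(1−p^{1−2s})) / ((1−t·p^{−s}+p^{1−2s})·(1−p^{−s})·(1−p^{1−s})). Then for every complex s at which all the factors (1−t·p^{−s}+p^{1−2s}), (1−p^{−s}), (1−p^{1−s}) are nonzero both at s and at 1−s, one has the local functional equation B_p(1−s) = −B_p(s). -/
/-- Under `z ↦ 1 / (q z)`, the rational function
`e z (1 - q z²) / ((1 - t z + q z²) (1 - z) (1 - q z))` changes sign. -/
theorem localGenFun_inv_mul {K : Type*} [Field K] {q z t : K} (e : K) (hq : q ≠ 0) (hz : z ≠ 0)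
    (h₁ : 1 - t * z + q * z ^ 2 ≠ 0) (h₂ : 1 - z ≠ 0) (h₃ : 1 - q * z ≠ 0) :
    e * (q * z)⁻¹ * (1 - (q * z ^ 2)⁻¹) /
        ((1 - t * (q * z)⁻¹ + (q * z ^ 2)⁻¹) * (1 - (q * z)⁻¹) * (1 - z⁻¹)) =
      -(e * z * (1 - q * z ^ 2) / ((1 - t * z + q * z ^ 2) * (1 - z) * (1 - q * z))) := by
  have e₀ : 1 - (q * z ^ 2)⁻¹ = -(1 - q * z ^ 2) / (q * z ^ 2) := by field_simp; ring
  have e₁ : 1 - t * (q * z)⁻¹ + (q * z ^ 2)⁻¹ = (1 - t * z + q * z ^ 2) / (q * z ^ 2) := by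
    field_simp; ring
  have e₂ : 1 - (q * z)⁻¹ = -(1 - q * z) / (q * z) := by field_simp; ring
  have e₃ : 1 - z⁻¹ = -(1 - z) / z := by field_simp; ring
  rw [e₀, e₁, e₂, e₃]
  generalize 1 - t * z + q * z ^ 2 = a at *
  generalize 1 - z = b at *
  generalize 1 - q * z = c at *
  field_simp

/-- Local functional equation `B_p(1-s) = -B_p(s)` for the local generating function. -/
theorem stmt_12 (p : ℕ) (hp : p.Prime) (t : ℝ) (B : ℂ → ℂ)
    (hB : ∀ s : ℂ, B s =
      (1 + (p : ℂ) - (t : ℂ)) * (p : ℂ) ^ (-s) * (1 - (p : ℂ) ^ (1 - 2 * s)) /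
        ((1 - (t : ℂ) * (p : ℂ) ^ (-s) + (p : ℂ) ^ (1 - 2 * s)) *
          (1 - (p : ℂ) ^ (-s)) * (1 - (p : ℂ) ^ (1 - s)))) :
    ∀ s : ℂ,
      (1 - (t : ℂ) * (p : ℂ) ^ (-s) + (p : ℂ) ^ (1 - 2 * s)) ≠ 0 →
      (1 - (p : ℂ) ^ (-s)) ≠ 0 →
      (1 - (p : ℂ) ^ (1 - s)) ≠ 0 →
      (1 - (t : ℂ) * (p : ℂ) ^ (-(1 - s)) + (p : ℂ) ^ (1 - 2 * (1 - s))) ≠ 0 →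
      (1 - (p : ℂ) ^ (-(1 - s))) ≠ 0 →
      (1 - (p : ℂ) ^ (1 - (1 - s))) ≠ 0 →
      B (1 - s) = -B s := by
  intro s h₁ h₂ h₃ _ _ _
  have hq : (p : ℂ) ≠ 0 := Nat.cast_ne_zero.mpr hp.ne_zero
  have hz : (p : ℂ) ^ (-s) ≠ 0 := by simp [Complex.cpow_eq_zero_iff, hq]
  have E₁ : (p : ℂ) ^ (1 - s) = p * (p : ℂ) ^ (-s) := by
    rw [sub_eq_add_neg, Complex.cpow_add _ _ hq, Complex.cpow_one]
  have E₂ : (p : ℂ) ^ (1 - 2 * s) = p * ((p : ℂ) ^ (-s)) ^ 2 := by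
    rw [show 1 - 2 * s = 1 + (-s + -s) by ring, Complex.cpow_add _ _ hq, Complex.cpow_one,
      Complex.cpow_add _ _ hq, sq]
  have E₃ : (p : ℂ) ^ (-(1 - s)) = (p * (p : ℂ) ^ (-s))⁻¹ := by rw [Complex.cpow_neg, E₁]
  have E₄ : (p : ℂ) ^ (1 - 2 * (1 - s)) = (p * ((p : ℂ) ^ (-s)) ^ 2)⁻¹ := by
    rw [show 1 - 2 * (1 - s) = -(1 - 2 * s) by ring, Complex.cpow_neg, E₂]
  have E₅ : (p : ℂ) ^ (1 - (1 - s)) = ((p : ℂ) ^ (-s))⁻¹ := by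
    rw [show 1 - (1 - s) = -(-s) by ring, Complex.cpow_neg]
  rw [E₂] at h₁
  rw [E₁] at h₃
  rw [hB, hB, E₃, E₄, E₅, E₁, E₂]
  exact localGenFun_inv_mul _ hq hz h₁ h₂ h₃
end

section
/- Let S be a finite set of primes and (a_p) integers indexed by the primes p ∉ S with a_p² ≤ 4p. Then for every complex s with Re(s) > 2, all of the following infinite products over primes converge, and ∏_{p∉S} (1−p^{1−2s}) / ((1−a_p·p^{−s}+p^{1−2s})·(1−p^{1−s})) = (∏_{p∉S} (1−a_p·p^{−s}+p^{1−2s})^{−1}) · (∏_{p∈S} (1−p^{1−s})) · (∏_{p∈S} (1−p^{1−2s})^{−1}) · ζ(s−1) · ζ(2s−1)^{−1}, where ζ is the Riemann zeta function. -/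
/-- The Euler product of the Riemann zeta function with finitely many factors removed. -/
theorem riemannZeta_eulerProduct_hasProd_notMem (S : Finset ℕ) (hS : ∀ p ∈ S, p.Prime) {w : ℂ}
    (hw : 1 < w.re) :
    HasProd (fun q : {q : ℕ // q.Prime ∧ q ∉ S} => (1 - (q.1 : ℂ) ^ (-w))⁻¹)
      (riemannZeta w * ∏ p ∈ S, (1 - (p : ℂ) ^ (-w))) := by
  have hfin : HasProd ((S : Set ℕ).mulIndicator fun p : ℕ => 1 - (p : ℂ) ^ (-w))
      (∏ p ∈ S, (1 - (p : ℂ) ^ (-w))) :=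
    hasProd_subtype_iff_mulIndicator.1 (S.hasProd fun p : ℕ => 1 - (p : ℂ) ^ (-w))
  have hzeta : HasProd ({p : ℕ | p.Prime}.mulIndicator fun p : ℕ => (1 - (p : ℂ) ^ (-w))⁻¹)
      (riemannZeta w) :=
    hasProd_subtype_iff_mulIndicator.1 (riemannZeta_eulerProduct_hasProd hw)
  refine (hasProd_subtype_iff_mulIndicator (s := {q : ℕ | q.Prime ∧ q ∉ S})
    (f := fun p : ℕ => (1 - (p : ℂ) ^ (-w))⁻¹)).2 ?_
  convert hzeta.mul hfin using 1
  ext p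
  by_cases hpS : p ∈ S
  · simp [Set.mulIndicator, hpS, hS p hpS,
      inv_mul_cancel₀ (Complex.one_sub_prime_cpow_ne_zero (hS p hpS) hw)]
  · simp [Set.mulIndicator, hpS]

/-- If `b² ≤ 4n`, then `-b n⁻ˢ + n^{1-2s}` is bounded by `2x + x²` with `x = n^{1/2 - Re s}`. -/
theorem norm_neg_mul_cpow_add_cpow_le {n : ℕ} (hn : 0 < n) {b : ℤ} (hb : b ^ 2 ≤ 4 * n) (s : ℂ) :
    ‖-((b : ℂ) * (n : ℂ) ^ (-s)) + (n : ℂ) ^ (1 - 2 * s)‖ ≤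
      2 * (n : ℝ) ^ (1 / 2 - s.re) + ((n : ℝ) ^ (1 / 2 - s.re)) ^ 2 := by
  have hn' : (0 : ℝ) < n := by exact_mod_cast hn
  have hb' : |(b : ℝ)| ≤ 2 * (n : ℝ) ^ (1 / 2 : ℝ) := by
    rw [← Real.sqrt_eq_rpow]
    refine abs_le_of_sq_le_sq ?_ (by positivity)
    rw [mul_pow, Real.sq_sqrt hn'.le]
    norm_num
    exact_mod_cast hb
  refine (norm_add_le _ _).trans (add_le_add ?_ (le_of_eq ?_))
  · rw [norm_neg, norm_mul, Complex.norm_natCast_cpow_of_pos hn, Complex.norm_intCast,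
      Complex.neg_re, sub_eq_add_neg, Real.rpow_add hn', ← mul_assoc]
    gcongr
  · rw [Complex.norm_natCast_cpow_of_pos hn, ← Real.rpow_mul_natCast hn'.le]
    congr 1
    simp
    ring

/-- `n^{1/2 - σ}` squares to at most `1/8` when `n ≥ 2` and `σ ≥ 2`. -/
theorem sq_natCast_rpow_half_sub_le {n : ℕ} (hn : 2 ≤ n) {σ : ℝ} (hσ : 2 ≤ σ) :
    ((n : ℝ) ^ (1 / 2 - σ)) ^ 2 ≤ 1 / 8 := by
  have hn' : (2 : ℝ) ≤ n := by exact_mod_cast hn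
  rw [← Real.rpow_mul_natCast (by positivity)]
  calc (n : ℝ) ^ ((1 / 2 - σ) * (2 : ℕ)) ≤ (n : ℝ) ^ (-3 : ℝ) :=
        Real.rpow_le_rpow_of_exponent_le (by linarith) (by push_cast; linarith)
    _ ≤ (2 : ℝ) ^ (-3 : ℝ) := Real.rpow_le_rpow_of_nonpos (by norm_num) hn' (by norm_num)
    _ = 1 / 8 := by
        rw [Real.rpow_neg (by norm_num)]
        norm_num

/-- Euler-product factorization of the global generating function for `Re s > 2`. -/
theorem stmt_13 (S : Finset ℕ) (hS : ∀ p ∈ S, p.Prime) (a : ℕ → ℤ)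
    (ha : ∀ p : ℕ, p.Prime → p ∉ S → (a p) ^ 2 ≤ 4 * p) :
    ∀ s : ℂ, 2 < s.re →
      Multipliable (fun q : {q : ℕ // q.Prime ∧ q ∉ S} =>
        (1 - (q.1 : ℂ) ^ (1 - 2 * s)) /
          ((1 - (a q.1 : ℂ) * (q.1 : ℂ) ^ (-s) + (q.1 : ℂ) ^ (1 - 2 * s)) *
            (1 - (q.1 : ℂ) ^ (1 - s)))) ∧
      Multipliable (fun q : {q : ℕ // q.Prime ∧ q ∉ S} =>
        (1 - (a q.1 : ℂ) * (q.1 : ℂ) ^ (-s) + (q.1 : ℂ) ^ (1 - 2 * s))⁻¹) ∧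
      (∏' q : {q : ℕ // q.Prime ∧ q ∉ S},
          (1 - (q.1 : ℂ) ^ (1 - 2 * s)) /
            ((1 - (a q.1 : ℂ) * (q.1 : ℂ) ^ (-s) + (q.1 : ℂ) ^ (1 - 2 * s)) *
              (1 - (q.1 : ℂ) ^ (1 - s)))) =
        (∏' q : {q : ℕ // q.Prime ∧ q ∉ S},
            (1 - (a q.1 : ℂ) * (q.1 : ℂ) ^ (-s) + (q.1 : ℂ) ^ (1 - 2 * s))⁻¹) *
          (∏ p ∈ S, (1 - (p : ℂ) ^ (1 - s))) *
          (∏ p ∈ S, (1 - (p : ℂ) ^ (1 - 2 * s))⁻¹) *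
          riemannZeta (s - 1) * (riemannZeta (2 * s - 1))⁻¹ := by
  intro s hs
  set u : {q : ℕ // q.Prime ∧ q ∉ S} → ℂ := fun q =>
    -((a q.1 : ℂ) * (q.1 : ℂ) ^ (-s)) + (q.1 : ℂ) ^ (1 - 2 * s) with hu
  have hfactor (q : {q : ℕ // q.Prime ∧ q ∉ S}) :
      1 - (a q.1 : ℂ) * (q.1 : ℂ) ^ (-s) + (q.1 : ℂ) ^ (1 - 2 * s) = 1 + u q := by
    simp only [hu]
    ring
  have hbound (q : {q : ℕ // q.Prime ∧ q ∉ S}) :=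
    norm_neg_mul_cpow_add_cpow_le q.2.1.pos (ha q.1 q.2.1 q.2.2) s
  have hsq (q : {q : ℕ // q.Prime ∧ q ∉ S}) := sq_natCast_rpow_half_sub_le q.2.1.two_le hs.le
  have hnonneg (q : {q : ℕ // q.Prime ∧ q ∉ S}) : 0 ≤ (q.1 : ℝ) ^ (1 / 2 - s.re) := by positivity
  have hsum : Summable fun q => ‖u q‖ := by
    have hrpow : Summable fun q : {q : ℕ // q.Prime ∧ q ∉ S} => (q.1 : ℝ) ^ (1 / 2 - s.re) :=
      (Real.summable_nat_rpow.2 (by linarith)).subtype {q : ℕ | q.Prime ∧ q ∉ S}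
    refine (hrpow.mul_left 3).of_nonneg_of_le (fun _ => norm_nonneg _) fun q =>
      (hbound q).trans ?_
    nlinarith [hsq q, hnonneg q]
  have hne (q) : 1 + u q ≠ 0 := by
    intro h
    have hnorm : ‖u q‖ = 1 := by rw [eq_neg_of_add_eq_zero_right h]; simp
    have := hnorm ▸ hbound q
    nlinarith [hsq q, hnonneg q]
  have hL : HasProd (fun q => (1 + u q)⁻¹) (∏' q, (1 + u q)⁻¹) :=
    ((multipliable_one_add_of_summable hsum).inv₀
      (tprod_one_add_ne_zero_of_summable hne hsum)).hasProd
  have hre₁ : 1 < (s - 1).re := by simp; linarith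
  have hre₂ : 1 < (2 * s - 1).re := by simp; linarith
  have hzeta₁ := riemannZeta_eulerProduct_hasProd_notMem S hS hre₁
  have hzeta₂ := (riemannZeta_eulerProduct_hasProd_notMem S hS hre₂).inv₀
    (mul_ne_zero (riemannZeta_ne_zero_of_one_lt_re hre₂) (Finset.prod_ne_zero_iff.2
      fun p hp => Complex.one_sub_prime_cpow_ne_zero (hS p hp) hre₂))
  simp only [neg_sub, inv_inv] at hzeta₁ hzeta₂
  have hB := (hL.mul hzeta₁).mul hzeta₂
  have hterm (q : {q : ℕ // q.Prime ∧ q ∉ S}) :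
      (1 - (q.1 : ℂ) ^ (1 - 2 * s)) / ((1 + u q) * (1 - (q.1 : ℂ) ^ (1 - s))) =
        (1 + u q)⁻¹ * (1 - (q.1 : ℂ) ^ (1 - s))⁻¹ * (1 - (q.1 : ℂ) ^ (1 - 2 * s)) := by
    rw [div_eq_mul_inv, mul_inv, mul_comm]
  simp only [hfactor, hterm]
  refine ⟨hB.multipliable, hL.multipliable, ?_⟩
  rw [hB.tprod_eq, mul_inv, Finset.prod_inv_distrib]
  ring
end

section
/- Let S be a finite set of primes and (a_p) integers indexed by the primes p ∉ S with a_p² ≤ 4p, and let B(s) = ∏_{p∉S} (1−p^{1−2s}) / ((1−a_p·p^{−s}+p^{1−2s})·(1−p^{1−s})). Then B has a simple pole at s = 2: as s → 2 with Re(s) > 2, (s−2)·B(s) converges to (∏_{p∈S}(1−p^{−1})) · (∏_{p∈S}(1−p^{−3})^{−1}) · (∏_{p∉S}(1−a_p·p^{−2}+p^{−3})^{−1}) / ζ(3), where the product over p ∉ S converges and ζ is the Riemann zeta function. -/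
open Filter

/-- The local factor `1 - c p^{-s} + p^{1-2s}` differs from `1` by at most `5/6` and by
at most `3 p^{-3/2}` on `2 ≤ Re s`, provided `c² ≤ 4p`. -/
lemma norm_localFactor_sub_one_le {p : ℕ} (hp : 2 ≤ p) {c : ℤ} (hc : c ^ 2 ≤ 4 * (p : ℤ)) {s : ℂ}
    (hs : 2 ≤ s.re) :
    ‖(c : ℂ) * (p : ℂ) ^ (-s) - (p : ℂ) ^ (1 - 2 * s)‖ ≤ 3 * (p : ℝ) ^ (-(3 / 2) : ℝ) ∧
    ‖(c : ℂ) * (p : ℂ) ^ (-s) - (p : ℂ) ^ (1 - 2 * s)‖ ≤ 5 / 6 := by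
  have hp0 : 0 < p := by omega
  have hp2 : (2 : ℝ) ≤ p := by exact_mod_cast hp
  have hpr : (0 : ℝ) < p := by linarith
  set x : ℝ := (p : ℝ) ^ (-(3 / 2) : ℝ) with hx
  have hx0 : 0 < x := Real.rpow_pos_of_pos hpr _
  have hxsq : x ^ 2 = ((p : ℝ) ^ 3)⁻¹ := by
    rw [hx, ← Real.rpow_natCast, ← Real.rpow_mul hpr.le, ← Real.rpow_natCast (p : ℝ) 3,
      ← Real.rpow_neg hpr.le]
    norm_num
  have hx8 : x ^ 2 ≤ 1 / 8 := by
    rw [hxsq, one_div]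
    apply inv_anti₀ (by norm_num)
    calc (8 : ℝ) = 2 ^ 3 := by norm_num
      _ ≤ (p : ℝ) ^ 3 := by gcongr
  have hxle : x ≤ 354 / 1000 := by nlinarith
  have hcabs : |(c : ℝ)| ≤ 2 * (p : ℝ) ^ (1 / 2 : ℝ) := by
    rw [← Real.sqrt_eq_rpow]
    have hcr : (c : ℝ) ^ 2 ≤ 4 * p := by exact_mod_cast hc
    refine abs_le_of_sq_le_sq ?_ (by positivity)
    rw [mul_pow, Real.sq_sqrt hpr.le]
    linarith
  have h1 : ‖(c : ℂ) * (p : ℂ) ^ (-s)‖ ≤ 2 * x := by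
    rw [norm_mul, Complex.norm_natCast_cpow_of_pos hp0, Complex.norm_intCast]
    calc |(c : ℝ)| * (p : ℝ) ^ (-s).re
        ≤ (2 * (p : ℝ) ^ (1 / 2 : ℝ)) * (p : ℝ) ^ (-2 : ℝ) := by
          gcongr
          · linarith
          · simpa using hs
      _ = 2 * x := by
          rw [mul_assoc, ← Real.rpow_add hpr, hx]
          norm_num
  have h2 : ‖(p : ℂ) ^ (1 - 2 * s)‖ ≤ x ^ 2 := by
    rw [Complex.norm_natCast_cpow_of_pos hp0, hx, ← Real.rpow_natCast, ← Real.rpow_mul hpr.le]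
    apply Real.rpow_le_rpow_of_exponent_le (by linarith)
    simp
    linarith
  have h3 := norm_sub_le ((c : ℂ) * (p : ℂ) ^ (-s)) ((p : ℂ) ^ (1 - 2 * s))
  constructor <;> nlinarith

/-- The inverse local factor is `1 + O(p^{-3/2})`, uniformly on `2 ≤ Re s`. -/
lemma norm_inv_localFactor_sub_one_le {p : ℕ} (hp : 2 ≤ p) {c : ℤ} (hc : c ^ 2 ≤ 4 * (p : ℤ))
    {s : ℂ} (hs : 2 ≤ s.re) :
    1 - (c : ℂ) * (p : ℂ) ^ (-s) + (p : ℂ) ^ (1 - 2 * s) ≠ 0 ∧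
    ‖(1 - (c : ℂ) * (p : ℂ) ^ (-s) + (p : ℂ) ^ (1 - 2 * s))⁻¹ - 1‖
      ≤ 18 * (p : ℝ) ^ (-(3 / 2) : ℝ) := by
  obtain ⟨h1, h2⟩ := norm_localFactor_sub_one_le hp hc hs
  set u := (c : ℂ) * (p : ℂ) ^ (-s) - (p : ℂ) ^ (1 - 2 * s) with hu
  have hfac : 1 - (c : ℂ) * (p : ℂ) ^ (-s) + (p : ℂ) ^ (1 - 2 * s) = 1 - u := by rw [hu]; ring
  rw [hfac]
  have hlow : 1 / 6 ≤ ‖1 - u‖ := by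
    have := norm_sub_norm_le (1 : ℂ) u
    rw [norm_one] at this
    linarith
  have hne : 1 - u ≠ 0 := norm_pos_iff.mp (by linarith)
  refine ⟨hne, ?_⟩
  have : (1 - u)⁻¹ - 1 = u / (1 - u) := by field_simp; ring
  rw [this, norm_div, div_le_iff₀ (by linarith)]
  have : 0 ≤ (p : ℝ) ^ (-(3 / 2) : ℝ) := by positivity
  nlinarith

/-- Removing finitely many nonzero Euler factors from a convergent product over the primes. -/
lemma hasProd_primes_not_mem {S : Finset ℕ} (hS : ∀ p ∈ S, p.Prime) {f : ℕ → ℂ}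
    (hf : ∀ p ∈ S, f p ≠ 0) {z : ℂ} (h : HasProd (fun p : Nat.Primes ↦ f p) z) :
    HasProd (fun q : {q : ℕ // q.Prime ∧ q ∉ S} ↦ f q) (z * ∏ p ∈ S, (f p)⁻¹) := by
  have h1 : HasProd (Set.mulIndicator {p : ℕ | p.Prime} f) z :=
    hasProd_subtype_iff_mulIndicator.mp h
  have h2 : HasProd (Set.mulIndicator (S : Set ℕ) fun p ↦ (f p)⁻¹) (∏ p ∈ S, (f p)⁻¹) :=
    hasProd_subtype_iff_mulIndicator.mp (Finset.hasProd S _)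
  refine (hasProd_subtype_iff_mulIndicator (s := {q : ℕ | q.Prime ∧ q ∉ S})).mpr ?_
  convert h1.mul h2 using 1
  ext p
  by_cases hpS : p ∈ S
  · simp [Set.mulIndicator, hpS, hS p hpS, hf p hpS]
  · simp [Set.mulIndicator, hpS]

lemma one_sub_prime_cpow_ne_zero {p : ℕ} (hp : p.Prime) {w : ℂ} (hw : 1 < w.re) :
    1 - (p : ℂ) ^ (-w) ≠ 0 := by
  intro h
  have h1 : ‖(p : ℂ) ^ (-w)‖ = 1 := by rw [← sub_eq_zero.mp h, norm_one]
  rw [Complex.norm_natCast_cpow_of_pos hp.pos] at h1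
  have := Real.rpow_lt_one_of_one_lt_of_neg (x := (p : ℝ)) (z := (-w).re)
    (by exact_mod_cast hp.one_lt) (by simp; linarith)
  linarith

/-- The Euler product of `ζ` with the factors in `S` removed. -/
lemma riemannZeta_hasProd_not_mem {S : Finset ℕ} (hS : ∀ p ∈ S, p.Prime) {w : ℂ}
    (hw : 1 < w.re) :
    HasProd (fun q : {q : ℕ // q.Prime ∧ q ∉ S} ↦ (1 - (q.1 : ℂ) ^ (-w))⁻¹)
      (riemannZeta w * ∏ p ∈ S, (1 - (p : ℂ) ^ (-w))) := by
  simpa only [inv_inv] using hasProd_primes_not_mem hS (f := fun p ↦ (1 - (p : ℂ) ^ (-w))⁻¹)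
    (fun p hp ↦ inv_ne_zero (one_sub_prime_cpow_ne_zero (hS p hp) hw))
    (riemannZeta_eulerProduct_hasProd hw)

/-- `B(s)` has a simple pole at `s = 2` with the stated residue. -/
theorem stmt_16 (S : Finset ℕ) (hS : ∀ p ∈ S, p.Prime) (a : ℕ → ℤ)
    (ha : ∀ p : ℕ, p.Prime → p ∉ S → (a p) ^ 2 ≤ 4 * p)
    (B : ℂ → ℂ)
    (hB : ∀ s : ℂ, B s = ∏' q : {q : ℕ // q.Prime ∧ q ∉ S},
      (1 - (q.1 : ℂ) ^ (1 - 2 * s)) /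
        ((1 - (a q.1 : ℂ) * (q.1 : ℂ) ^ (-s) + (q.1 : ℂ) ^ (1 - 2 * s)) *
          (1 - (q.1 : ℂ) ^ (1 - s)))) :
    Multipliable (fun q : {q : ℕ // q.Prime ∧ q ∉ S} =>
      (1 - (a q.1 : ℂ) * ((q.1 : ℂ) ^ 2)⁻¹ + ((q.1 : ℂ) ^ 3)⁻¹)⁻¹) ∧
    Tendsto (fun s : ℂ => (s - 2) * B s) (nhdsWithin 2 {s : ℂ | 2 < s.re})
      (nhds
        ((∏ p ∈ S, (1 - ((p : ℂ))⁻¹)) *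
          (∏ p ∈ S, (1 - ((p : ℂ) ^ 3)⁻¹)⁻¹) *
          (∏' q : {q : ℕ // q.Prime ∧ q ∉ S},
            (1 - (a q.1 : ℂ) * ((q.1 : ℂ) ^ 2)⁻¹ + ((q.1 : ℂ) ^ 3)⁻¹)⁻¹) /
          riemannZeta 3)) := by
  let L : ℂ → {q : ℕ // q.Prime ∧ q ∉ S} → ℂ := fun s q ↦
    1 - (a q.1 : ℂ) * (q.1 : ℂ) ^ (-s) + (q.1 : ℂ) ^ (1 - 2 * s)
  have hL2 : (fun q : {q : ℕ // q.Prime ∧ q ∉ S} ↦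
      (1 - (a q.1 : ℂ) * ((q.1 : ℂ) ^ 2)⁻¹ + ((q.1 : ℂ) ^ 3)⁻¹)⁻¹) =
      fun q ↦ 1 + ((L 2 q)⁻¹ - 1) := by
    ext q
    have e2 : (q.1 : ℂ) ^ (-2 : ℂ) = ((q.1 : ℂ) ^ 2)⁻¹ := by
      rw [Complex.cpow_neg]; norm_cast
    have e3 : (q.1 : ℂ) ^ (1 - 2 * 2 : ℂ) = ((q.1 : ℂ) ^ 3)⁻¹ := by
      rw [show (1 - 2 * 2 : ℂ) = -3 by norm_num, Complex.cpow_neg]; norm_cast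
    simp only [L, e2, e3, add_sub_cancel]
  have hbound (s : ℂ) (hs : 2 ≤ s.re) (q : {q : ℕ // q.Prime ∧ q ∉ S}) :=
    norm_inv_localFactor_sub_one_le q.2.1.two_le (ha q.1 q.2.1 q.2.2) hs
  have hsum : Summable fun q : {q : ℕ // q.Prime ∧ q ∉ S} ↦
      18 * (q.1 : ℝ) ^ (-(3 / 2) : ℝ) :=
    ((Real.summable_nat_rpow.mpr (by norm_num)).comp_injective
      Subtype.val_injective).mul_left 18
  have hmul (s : ℂ) (hs : 2 ≤ s.re) : Multipliable fun q ↦ 1 + ((L s q)⁻¹ - 1) :=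
    multipliable_one_add_of_summable
      (hsum.of_nonneg_of_le (fun _ ↦ norm_nonneg _) fun q ↦ (hbound s hs q).2)
  rw [hL2]
  refine ⟨hmul 2 (by simp), ?_⟩
  have hmem : ∀ᶠ s : ℂ in nhdsWithin 2 {s : ℂ | 2 < s.re}, 2 < s.re := self_mem_nhdsWithin
  have hid : Tendsto (fun s : ℂ ↦ s) (nhdsWithin 2 {s : ℂ | 2 < s.re}) (nhds 2) :=
    tendsto_id.mono_left nhdsWithin_le_nhds
  have hcpow (p : ℕ) (hp : p.Prime) (w : ℂ) : ContinuousAt (fun w : ℂ ↦ (p : ℂ) ^ w) w :=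
    continuousAt_const_cpow (by exact_mod_cast hp.ne_zero)
  have hLlim : Tendsto (fun s ↦ ∏' q, (1 + ((L s q)⁻¹ - 1)))
      (nhdsWithin 2 {s : ℂ | 2 < s.re}) (nhds (∏' q, (1 + ((L 2 q)⁻¹ - 1)))) := by
    refine tendsto_tprod_one_add_of_dominated_convergence hsum (fun q ↦ ?_) ?_
    · refine Tendsto.sub_const (Tendsto.inv₀ ?_ (hbound 2 (by simp) q).1) 1
      refine Tendsto.add (tendsto_const_nhds.sub (tendsto_const_nhds.mul ?_)) ?_
      · exact (hcpow q.1 q.2.1 _).tendsto.comp hid.neg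
      · exact (hcpow q.1 q.2.1 _).tendsto.comp (tendsto_const_nhds.sub (hid.const_mul 2))
    · filter_upwards [hmem] with s hs q using (hbound s hs.le q).2
  have hone : Tendsto (fun s : ℂ ↦ s - 1) (nhdsWithin 2 {s : ℂ | 2 < s.re}) (nhds 1) := by
    convert hid.sub_const 1 using 2; norm_num
  have hzeta1 : Tendsto (fun s : ℂ ↦ (s - 2) * riemannZeta (s - 1))
      (nhdsWithin 2 {s : ℂ | 2 < s.re}) (nhds 1) := by
    have hshift : Tendsto (fun s : ℂ ↦ s - 1) (nhdsWithin 2 {s : ℂ | 2 < s.re})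
        (nhdsWithin 1 {1}ᶜ) := by
      refine tendsto_nhdsWithin_iff.mpr ⟨hone, ?_⟩
      filter_upwards [hmem] with s hs h
      have := congrArg Complex.re (Set.mem_singleton_iff.mp h)
      simp at this
      linarith
    refine (riemannZeta_residue_one.comp hshift).congr fun s ↦ ?_
    simp only [Function.comp_apply]
    ring
  have hthree : Tendsto (fun s : ℂ ↦ 2 * s - 1) (nhdsWithin 2 {s : ℂ | 2 < s.re}) (nhds 3) := by
    convert (hid.const_mul 2).sub_const 1 using 2; norm_num
  have hzeta3 : Tendsto (fun s : ℂ ↦ riemannZeta (2 * s - 1))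
      (nhdsWithin 2 {s : ℂ | 2 < s.re}) (nhds (riemannZeta 3)) :=
    (differentiableAt_riemannZeta (by norm_num)).continuousAt.tendsto.comp hthree
  have hfin {g : ℂ → ℂ} {w : ℂ} (hg : Tendsto g (nhdsWithin 2 {s : ℂ | 2 < s.re}) (nhds w)) :
      Tendsto (fun s ↦ ∏ p ∈ S, (1 - (p : ℂ) ^ (-g s))) (nhdsWithin 2 {s : ℂ | 2 < s.re})
        (nhds (∏ p ∈ S, (1 - (p : ℂ) ^ (-w)))) :=
    tendsto_finsetProd S fun p hp ↦
      tendsto_const_nhds.sub ((hcpow p (hS p hp) _).tendsto.comp hg.neg)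
  have hne3 : riemannZeta 3 * ∏ p ∈ S, (1 - (p : ℂ) ^ (-3 : ℂ)) ≠ 0 :=
    mul_ne_zero (riemannZeta_ne_zero_of_one_lt_re (by norm_num))
      (Finset.prod_ne_zero_iff.mpr fun p hp ↦
        one_sub_prime_cpow_ne_zero (hS p hp) (by norm_num))
  have hlim := (hLlim.mul (hzeta1.mul (hfin hone))).mul ((hzeta3.mul (hfin hthree)).inv₀ hne3)
  convert hlim.congr' ?_ using 2
  · have e1 : ∏ p ∈ S, (1 - (p : ℂ) ^ (-1 : ℂ)) = ∏ p ∈ S, (1 - (p : ℂ)⁻¹) := by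
      simp only [Complex.cpow_neg_one]
    have e3 : ∏ p ∈ S, (1 - (p : ℂ) ^ (-3 : ℂ)) = ∏ p ∈ S, (1 - ((p : ℂ) ^ 3)⁻¹) :=
      Finset.prod_congr rfl fun p _ ↦ by rw [Complex.cpow_neg]; norm_cast
    rw [e1, e3, Finset.prod_inv_distrib, mul_inv]
    ring
  · filter_upwards [hmem] with s hs
    have hre1 : 1 < (s - 1).re := by simp; linarith
    have hre3 : 1 < (2 * s - 1).re := by simp; linarith
    have hne : riemannZeta (2 * s - 1) * ∏ p ∈ S, (1 - (p : ℂ) ^ (-(2 * s - 1))) ≠ 0 :=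
      mul_ne_zero (riemannZeta_ne_zero_of_one_lt_re hre3)
        (Finset.prod_ne_zero_iff.mpr fun p hp ↦ one_sub_prime_cpow_ne_zero (hS p hp) hre3)
    have hprod := ((hmul s hs.le).hasProd.mul (riemannZeta_hasProd_not_mem hS hre1)).mul
      ((riemannZeta_hasProd_not_mem hS hre3).inv₀ hne)
    have hBs : B s = _ := (hB s).trans (Eq.trans (tprod_congr fun q ↦ ?_) hprod.tprod_eq)
    · rw [hBs]
      ring
    · simp only [L, add_sub_cancel, inv_inv, neg_sub]
      rw [div_eq_mul_inv, mul_inv]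
      ring
end
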